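/- If a growth rule applied at some position to a pair (S,J) yields the pair (S',J'), then the lattice paths of (S,J) and (S',J') have the same endpoint (the total weight Σ_k μ(s_k,j_k) is unchanged); moreover, if J is dominant for S then J' is dominant for S'. -/

import Mathlib

/-!
A growth rule replaces a block of one or two letters without changing its total weight, so the
lattice paths before and after agree outside the block, and only the points strictly inside the new
block can leave the chamber. A U-rule or Y-rule leaves no such point. An H-rule leaves exactly one,
and it lies componentwise above the infimum of the three old points of the block (start, middle,
end), all of which are nonnegative.
-/

noncomputable section

/-- The ground field `K = ℚ(v)`. -/
abbrev K : Type := RatFunc ℚ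

/-- The indeterminate `v`. -/
def v : K := RatFunc.X

/-- The three states `-1, 0, 1`. -/
inductive St where
  | neg : St
  | zero : St
  | pos : St
deriving DecidableEq

instance : Fintype St where
  elems := {St.neg, St.zero, St.pos}
  complete := fun x => by cases x <;> simp

/-- The integer value of a state. -/
def stval : St → ℤ
  | .neg => -1
  | .zero => 0
  | .pos => 1

/-- The order `-1 < 0 < 1` on states. -/
def stLt (a b : St) : Prop := stval a < stval b

/-- The weight `μ(s, j) ∈ ℤ²`; `true` is the sign `+`, `false` is `-`. -/
def wt : Bool → St → ℤ × ℤ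
  | true, .pos => (1, 0)
  | true, .zero => (-1, 1)
  | true, .neg => (0, -1)
  | false, .pos => (0, 1)
  | false, .zero => (1, -1)
  | false, .neg => (-1, 0)

/-- Total weight `Σ μ(s_k, j_k)` of a sign string and a state string. -/
def wtSum (S : List Bool) (J : List St) : ℤ × ℤ :=
  ((S.zip J).map fun p => wt p.1 p.2).sum

/-- A state string is dominant if its lattice path stays in the dominant
Weyl chamber and returns to the origin. -/
def Dominant (S : List Bool) (J : List St) : Prop :=
  J.length = S.length ∧
  (∀ k : ℕ, 0 ≤ (wtSum (S.take k) (J.take k)).1 ∧ 0 ≤ (wtSum (S.take k) (J.take k)).2) ∧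
  wtSum S J = 0

/-- Coefficients of `b^{+-}(1) ∈ V⁺ ⊗ V⁻`. -/
def bCpm : St → St → K
  | .pos, .neg => 1
  | .zero, .zero => v⁻¹
  | .neg, .pos => v⁻¹ ^ 2
  | _, _ => 0

/-- Coefficients of `b^{-+}(1) ∈ V⁻ ⊗ V⁺`. -/
def bCmp : St → St → K
  | .pos, .neg => 1
  | .zero, .zero => v⁻¹
  | .neg, .pos => v⁻¹ ^ 2
  | _, _ => 0

/-- Matrix entries of `σ_{+-} : V⁺ ⊗ V⁻ → K`. -/
def sCpm : St → St → K
  | .neg, .pos => 1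
  | .zero, .zero => v
  | .pos, .neg => v ^ 2
  | _, _ => 0

/-- Matrix entries of `σ_{-+} : V⁻ ⊗ V⁺ → K`. -/
def sCmp : St → St → K
  | .neg, .pos => 1
  | .zero, .zero => v
  | .pos, .neg => v ^ 2
  | _, _ => 0

/-- `tYpp a b c` is the coefficient of `e_a ⊗ e_b` in `t^{++}_-(e_c)`. -/
def tYpp : St → St → St → K
  | .pos, .zero, .pos => 1
  | .zero, .pos, .pos => v⁻¹
  | .pos, .neg, .zero => 1
  | .neg, .pos, .zero => v⁻¹
  | .zero, .neg, .neg => 1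
  | .neg, .zero, .neg => v⁻¹
  | _, _, _ => 0

/-- `tYmm a b c` is the coefficient of `e_a ⊗ e_b` in `t^{--}_+(e_c)`. -/
def tYmm : St → St → St → K
  | .pos, .zero, .pos => 1
  | .zero, .pos, .pos => v⁻¹
  | .pos, .neg, .zero => 1
  | .neg, .pos, .zero => v⁻¹
  | .zero, .neg, .neg => 1
  | .neg, .zero, .neg => v⁻¹
  | _, _, _ => 0

/-- `tLpp a b c` is the coefficient of `e_c` in `t^-_{++}(e_a ⊗ e_b)`. -/
def tLpp : St → St → St → K
  | .pos, .zero, .pos => v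
  | .zero, .pos, .pos => 1
  | .pos, .neg, .zero => v
  | .neg, .pos, .zero => 1
  | .zero, .neg, .neg => v
  | .neg, .zero, .neg => 1
  | _, _, _ => 0

/-- `tLmm a b c` is the coefficient of `e_c` in `t^+_{--}(e_a ⊗ e_b)`. -/
def tLmm : St → St → St → K
  | .pos, .zero, .pos => v
  | .zero, .pos, .pos => 1
  | .pos, .neg, .zero => v
  | .neg, .pos, .zero => 1
  | .zero, .neg, .neg => v
  | .neg, .zero, .neg => 1
  | _, _, _ => 0

/-- Matrix entries of the H-map
`(id_{V⁺} ⊗ t^-_{++}) ∘ (t^{++}_- ⊗ id_{V⁺}) : V⁻ ⊗ V⁺ → V⁺ ⊗ V⁻`: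
`HCpm a b c d` is the coefficient of `e_a ⊗ e_b` in the image of `e_c ⊗ e_d`. -/
def HCpm (a b c d : St) : K := ∑ y : St, tYpp a y c * tLpp y d b

/-- Matrix entries of the H-map
`(t^-_{++} ⊗ id_{V⁺}) ∘ (id_{V⁺} ⊗ t^{++}_-) : V⁺ ⊗ V⁻ → V⁻ ⊗ V⁺`:
`HCmp a b c d` is the coefficient of `e_a ⊗ e_b` in the image of `e_c ⊗ e_d`. -/
def HCmp (a b c d : St) : K := ∑ x : St, tLpp c x a * tYpp x b d

/-- State patterns of the three H-rules: `(j_k, j_{k+1})` on top, the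
replacement below. -/
inductive HPat : St → St → St → St → Prop where
  | h1 : HPat .pos .zero .zero .pos
  | h2 : HPat .zero .zero .neg .pos
  | h3 : HPat .zero .neg .neg .zero

/-- State patterns of the three Y-rules. -/
inductive YPat : St → St → St → Prop where
  | y1 : YPat .pos .zero .pos
  | y2 : YPat .pos .neg .zero
  | y3 : YPat .zero .neg .neg

/-- One application of a growth rule, rewriting `(S, J)` to `(S', J')`. -/
inductive Step : List Bool → List St → List Bool → List St → Prop where
  | hstep (A B : List Bool) (P Q : List St) (s1 s2 : Bool) (j1 j2 j1' j2' : St)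
      (hl : A.length = P.length) (hs : s1 ≠ s2) (hp : HPat j1 j2 j1' j2') :
      Step (A ++ s1 :: s2 :: B) (P ++ j1 :: j2 :: Q)
        (A ++ (!s1) :: (!s2) :: B) (P ++ j1' :: j2' :: Q)
  | ustep (A B : List Bool) (P Q : List St) (s1 s2 : Bool)
      (hl : A.length = P.length) (hs : s1 ≠ s2) :
      Step (A ++ s1 :: s2 :: B) (P ++ St.pos :: St.neg :: Q) (A ++ B) (P ++ Q)
  | ystep (A B : List Bool) (P Q : List St) (s : Bool) (j1 j2 j' : St)
      (hl : A.length = P.length) (hp : YPat j1 j2 j') :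
      Step (A ++ s :: s :: B) (P ++ j1 :: j2 :: Q) (A ++ (!s) :: B) (P ++ j' :: Q)

/-- A complete execution of the growth algorithm from `(S, J)` down to the
pair of empty strings. -/
inductive Exec : List Bool → List St → Type where
  | nil : Exec [] []
  | hstep (A B : List Bool) (P Q : List St) (s1 s2 : Bool) (j1 j2 j1' j2' : St)
      (hl : A.length = P.length) (hs : s1 ≠ s2) (hp : HPat j1 j2 j1' j2')
      (e : Exec (A ++ (!s1) :: (!s2) :: B) (P ++ j1' :: j2' :: Q)) :
      Exec (A ++ s1 :: s2 :: B) (P ++ j1 :: j2 :: Q)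
  | ustep (A B : List Bool) (P Q : List St) (s1 s2 : Bool)
      (hl : A.length = P.length) (hs : s1 ≠ s2)
      (e : Exec (A ++ B) (P ++ Q)) :
      Exec (A ++ s1 :: s2 :: B) (P ++ St.pos :: St.neg :: Q)
  | ystep (A B : List Bool) (P Q : List St) (s : Bool) (j1 j2 j' : St)
      (hl : A.length = P.length) (hp : YPat j1 j2 j')
      (e : Exec (A ++ (!s) :: B) (P ++ j' :: Q)) :
      Exec (A ++ s :: s :: B) (P ++ j1 :: j2 :: Q)

/-- The web tensor of an execution, as coordinates with respect to the basis
`e^S_J` of `V^S`: `web e L` is the coefficient of `e^S_L`. -/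
def web : {S : List Bool} → {J : List St} → Exec S J → List St → K
  | _, _, .nil, L => if L = [] then 1 else 0
  | _, _, .hstep A _ _ _ s1 _ _ _ _ _ _ _ _ e, L =>
      match L.drop A.length with
      | a :: b :: R =>
          ∑ c : St, ∑ d : St,
            (if s1 then HCpm a b c d else HCmp a b c d) *
              web e (L.take A.length ++ c :: d :: R)
      | _ => 0
  | _, _, .ustep A _ _ _ s1 _ _ _ e, L =>
      match L.drop A.length with
      | a :: b :: R => (if s1 then bCpm a b else bCmp a b) * web e (L.take A.length ++ R)
      | _ => 0
  | _, _, .ystep A _ _ _ s _ _ _ _ _ e, L =>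
      match L.drop A.length with
      | a :: b :: R =>
          ∑ c : St, (if s then tYpp a b c else tYmm a b c) * web e (L.take A.length ++ c :: R)
      | _ => 0

/-- `c ∈ v⁻¹ ℤ[v⁻¹]`: a polynomial in `v⁻¹` with zero constant term. -/
def ZeroConst (c : K) : Prop :=
  ∃ p : Polynomial ℤ, p.coeff 0 = 0 ∧ c = Polynomial.aeval v⁻¹ p

/-- `x` has the negative-exponent property relative to a state string `J`
(`n` is the length of the ambient sign string). -/
def NegExpProp (n : ℕ) (x : List St → K) (J : List St) : Prop :=
  x J = 1 ∧ ∀ J' : List St, J'.length = n → J' ≠ J → ZeroConst (x J')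

/-- `c ∈ ℕ[v, v⁻¹]`: a Laurent polynomial with nonnegative integer
coefficients. -/
def IsNatLaurent (c : K) : Prop :=
  ∃ (p : Polynomial ℕ) (m : ℕ), c = v⁻¹ ^ m * Polynomial.aeval v p

/-- `c ∈ ℤ[v⁻¹]`. -/
def InZInv (c : K) : Prop := ∃ p : Polynomial ℤ, c = Polynomial.aeval v⁻¹ p

/-- Property P: all coefficients lie in `ℤ[v⁻¹]` and at most one of them has a
nonzero constant term. -/
def PropP (n : ℕ) (x : List St → K) : Prop :=
  (∀ J : List St, J.length = n → InZInv (x J)) ∧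
  ∀ J1 J2 : List St, J1.length = n → J2.length = n →
    ¬ ZeroConst (x J1) → ¬ ZeroConst (x J2) → J1 = J2

/-- The sign string `(+,+,−,−,+,+,−,−,+,+,−,−)`. -/
def base : List Bool :=
  [true, true, false, false, true, true, false, false, true, true, false, false]

lemma wtSum_cons (s : Bool) (j : St) (S : List Bool) (J : List St) :
    wtSum (s :: S) (j :: J) = wt s j + wtSum S J := by
  simp [wtSum]

lemma wtSum_append {A : List Bool} {P : List St} (hl : A.length = P.length)
    (S : List Bool) (J : List St) :
    wtSum (A ++ S) (P ++ J) = wtSum A P + wtSum S J := by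
  simp [wtSum, List.zip_append hl]

/-- The lattice path of `(S, J)`, started at `x`, stays in the dominant chamber and ends at `y`;
dominance of `J` for `S` is the case `x = y = 0`. The chamber is `{z | 0 ≤ z}` for the
componentwise order on `ℤ × ℤ`. Indices `k` past the end of the strings repeat the endpoint. -/
def IsDominantPath (x y : ℤ × ℤ) (S : List Bool) (J : List St) : Prop :=
  J.length = S.length ∧ (∀ k : ℕ, 0 ≤ x + wtSum (S.take k) (J.take k)) ∧ x + wtSum S J = y

lemma dominant_iff_isDominantPath {S : List Bool} {J : List St} :
    Dominant S J ↔ IsDominantPath 0 0 S J := by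
  simp [Dominant, IsDominantPath, Prod.le_def]

section Path

variable {x y : ℤ × ℤ} {S : List Bool} {J : List St}

lemma IsDominantPath.start_nonneg (h : IsDominantPath x y S J) : 0 ≤ x := by
  simpa [wtSum] using h.2.1 0

lemma isDominantPath_cons {s : Bool} {j : St} :
    IsDominantPath x y (s :: S) (j :: J) ↔ 0 ≤ x ∧ IsDominantPath (x + wt s j) y S J := by
  constructor
  · refine fun h => ⟨h.start_nonneg, by simpa using h.1, fun k => ?_, ?_⟩
    · simpa [wtSum_cons, add_assoc] using h.2.1 (k + 1)
    · simpa [wtSum_cons, add_assoc] using h.2.2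
  · rintro ⟨hx, hlen, hpath, hend⟩
    refine ⟨by simpa using hlen, fun k => ?_, ?_⟩
    · cases k with
      | zero => simpa [wtSum] using hx
      | succ k => simpa [wtSum_cons, add_assoc] using hpath k
    · simpa [wtSum_cons, add_assoc] using hend

lemma IsDominantPath.append_left {S' : List Bool} {J' : List St}
    (h : ∀ z, IsDominantPath z y S J → IsDominantPath z y S' J') :
    ∀ {x : ℤ × ℤ} {A : List Bool} {P : List St}, A.length = P.length →
      IsDominantPath x y (A ++ S) (P ++ J) → IsDominantPath x y (A ++ S') (P ++ J')
  | x, [], [], _, hx => h x hx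
  | _, _ :: _, _ :: _, hl, hx => by
    simp only [List.cons_append, isDominantPath_cons] at hx ⊢
    exact ⟨hx.1, append_left h (Nat.succ.inj hl) hx.2⟩

end Path

section Rules

variable {x y : ℤ × ℤ} {B : List Bool} {Q : List St} {s s₁ s₂ : Bool} {j₁ j₂ j j₁' j₂' : St}

lemma HPat.wt_add_wt (hp : HPat j₁ j₂ j₁' j₂') (hs : s₁ ≠ s₂) :
    wt s₁ j₁ + wt s₂ j₂ = wt (!s₁) j₁' + wt (!s₂) j₂' := by
  cases hp <;> decide +revert

lemma wt_pos_add_wt_neg (hs : s₁ ≠ s₂) : wt s₁ .pos + wt s₂ .neg = 0 := by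
  decide +revert

lemma YPat.wt_add_wt (hp : YPat j₁ j₂ j) (s : Bool) : wt s j₁ + wt s j₂ = wt (!s) j := by
  cases hp <;> decide +revert

lemma HPat.inf_le_wt (hp : HPat j₁ j₂ j₁' j₂') (hs : s₁ ≠ s₂) :
    0 ⊓ wt s₁ j₁ ⊓ (wt s₁ j₁ + wt s₂ j₂) ≤ wt (!s₁) j₁' := by
  cases hp <;> decide +revert

lemma IsDominantPath.hRule (hp : HPat j₁ j₂ j₁' j₂') (hs : s₁ ≠ s₂)
    (h : IsDominantPath x y (s₁ :: s₂ :: B) (j₁ :: j₂ :: Q)) :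
    IsDominantPath x y ((!s₁) :: (!s₂) :: B) (j₁' :: j₂' :: Q) := by
  simp only [isDominantPath_cons, add_assoc, hp.wt_add_wt hs] at h ⊢
  obtain ⟨hstart, hmid, htail⟩ := h
  refine ⟨hstart, ?_, htail⟩
  have hend : 0 ≤ x + (wt s₁ j₁ + wt s₂ j₂) := hp.wt_add_wt hs ▸ htail.start_nonneg
  calc
    0 ≤ (x + 0) ⊓ (x + wt s₁ j₁) ⊓ (x + (wt s₁ j₁ + wt s₂ j₂)) :=
      le_inf (le_inf (by rwa [add_zero]) hmid) hend
    _ = x + 0 ⊓ wt s₁ j₁ ⊓ (wt s₁ j₁ + wt s₂ j₂) := by rw [add_inf, add_inf]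
    _ ≤ x + wt (!s₁) j₁' := by grw [hp.inf_le_wt hs]

lemma IsDominantPath.uRule (hs : s₁ ≠ s₂)
    (h : IsDominantPath x y (s₁ :: s₂ :: B) (.pos :: .neg :: Q)) : IsDominantPath x y B Q := by
  simp only [isDominantPath_cons, add_assoc, wt_pos_add_wt_neg hs, add_zero] at h
  exact h.2.2

lemma IsDominantPath.yRule (hp : YPat j₁ j₂ j)
    (h : IsDominantPath x y (s :: s :: B) (j₁ :: j₂ :: Q)) :
    IsDominantPath x y ((!s) :: B) (j :: Q) := by
  simp only [isDominantPath_cons, add_assoc, hp.wt_add_wt] at h ⊢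
  exact ⟨h.1, h.2.2⟩

end Rules

section Step

variable {S S' : List Bool} {J J' : List St}

lemma Step.wtSum_eq (h : Step S J S' J') : wtSum S J = wtSum S' J' := by
  cases h with
  | hstep A B P Q s₁ s₂ j₁ j₂ j₁' j₂' hl hs hp =>
    simp only [wtSum_append hl, wtSum_cons, ← add_assoc (wt _ _), hp.wt_add_wt hs]
  | ustep A B P Q s₁ s₂ hl hs =>
    simp only [wtSum_append hl, wtSum_cons, ← add_assoc (wt _ _), wt_pos_add_wt_neg hs, zero_add]
  | ystep A B P Q s j₁ j₂ j hl hp =>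
    simp only [wtSum_append hl, wtSum_cons, ← add_assoc (wt _ _), hp.wt_add_wt]

lemma Step.isDominantPath {x y : ℤ × ℤ} (h : Step S J S' J') :
    IsDominantPath x y S J → IsDominantPath x y S' J' := by
  cases h with
  | hstep A B P Q s₁ s₂ j₁ j₂ j₁' j₂' hl hs hp => exact .append_left (fun _ => .hRule hp hs) hl
  | ustep A B P Q s₁ s₂ hl hs => exact .append_left (fun _ => .uRule hs) hl
  | ystep A B P Q s j₁ j₂ j hl hp => exact .append_left (fun _ => .yRule hp) hl

end Step

theorem step_preserves_weight_and_dominance_general {S S' : List Bool} {J J' : List St}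
    (h : Step S J S' J') :
    wtSum S J = wtSum S' J' ∧ ∀ x y, IsDominantPath x y S J → IsDominantPath x y S' J' :=
  ⟨h.wtSum_eq, fun _ _ => h.isDominantPath⟩

/-- a growth rule preserves the total weight, and it preserves
dominance. -/
theorem step_preserves_weight_and_dominance (S S' : List Bool) (J J' : List St)
    (h : Step S J S' J') :
    wtSum S J = wtSum S' J' ∧ (Dominant S J → Dominant S' J') := by
  simp only [dominant_iff_isDominantPath]
  exact (step_preserves_weight_and_dominance_general h).imp_right fun hpath => hpath 0 0

end
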